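/- Let n ≥ 3, δ := e^{−3}, and define f(x) := χ_{B_β(0,δ)}(x) / ( |x|_β² · |log |x|_β|⁶ ), where χ_{B_β(0,δ)} is the characteristic function of the β-ball B_β(0,δ). Then there exists a constant C = C(n,β) > 0 such that for every x ∈ ℝⁿ and every r > 0, ∫_{{y : |x−y|_β < r}} f(y) / |x−y|_β^{n−2} dy ≤ C · ( −log min(r,δ) )^{−5}. In particular, η_β(r) := sup_{x∈ℝⁿ} ∫_{{y : |x−y|_β < r}} f(y) / |x−y|_β^{n−2} dy tends to 0 as r → 0⁺. -/

import Mathlib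

open MeasureTheory Real Set Filter Topology

/-- The non-isotropic β-distance of `x` to the origin:
`|x|_β = (∑ k, |x k| ^ (1/β k)) ^ ((β₁+⋯+βₙ)/n)`. -/
noncomputable def betaDist (n : ℕ) (β : Fin n → ℝ) (x : Fin n → ℝ) : ℝ :=
  (∑ k, |x k| ^ (1 / β k)) ^ ((∑ k, β k) / n)

/-- The example function `f(x) = χ_{B_β(0,e⁻³)}(x) / (|x|_β² |log |x|_β|⁶)`. -/
noncomputable def fex (n : ℕ) (β : Fin n → ℝ) (x : Fin n → ℝ) : ℝ :=
  Set.indicator {z : Fin n → ℝ | betaDist n β z < Real.exp (-3)}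
    (fun z => 1 / (betaDist n β z ^ (2:ℝ) * |Real.log (betaDist n β z)| ^ (6:ℝ))) x

/-- The Stummel modulus (with `p = 2`-type kernel `|x-y|_β^{n-2}`) of `fex`:
`η_β(r) = sup_x ∫_{|x-y|_β<r} fex(y)/|x-y|_β^{n-2} dy`. -/
noncomputable def etaEx (n : ℕ) (β : Fin n → ℝ) (r : ℝ) : ℝ :=
  ⨆ x : Fin n → ℝ, ∫ y in {y : Fin n → ℝ | betaDist n β (x - y) < r},
    fex n β y / betaDist n β (x - y) ^ ((n:ℝ) - 2)

/-!
The function `t ↦ t⁻² |log t|⁻⁶` decreases on `(0, e⁻³]`; this is what fixes the radius of the ball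
in `fex`. Hence, with `t = |y|_β` and `u = |x - y|_β`, the integrand is at most `m⁻ⁿ |log m|⁻⁶` for
`m = min t u`. Integrating over `m < ρ = min r e⁻³` therefore costs at most twice the integral of
`|z|_β⁻ⁿ |log |z|_β|⁻⁶` over `|z|_β < ρ`. As `β`-balls of radius `s` have volume at most `(2s)ⁿ`,
the shell `e^{-(a+1)} < |z|_β ≤ e^{-a}` contributes at most a constant times `a⁻⁶`, and summing
over `a = -log ρ + j` gives the order `(-log ρ)⁻⁵`.
-/

/-- The radial profile `t ↦ t⁻ᵃ |log t|^(-q)`. The function `fex` is a truncation of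
`logWeight 2 6` composed with `betaDist`. -/
noncomputable def logWeight (a q t : ℝ) : ℝ :=
  1 / (t ^ a * |log t| ^ q)

lemma logWeight_nonneg (a q : ℝ) {t : ℝ} (ht : 0 ≤ t) : 0 ≤ logWeight a q t := by
  unfold logWeight
  positivity

lemma measurable_logWeight (a q : ℝ) : Measurable (logWeight a q) := by
  unfold logWeight
  fun_prop

lemma rpow_mul_abs_log_rpow_eq {a q t : ℝ} (hq : 0 < q) (ht : 0 < t) (ht1 : t ≤ 1) :
    t ^ a * |log t| ^ q = (log t⁻¹ / t⁻¹ ^ (a / q)) ^ q := by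
  rw [log_inv, ← abs_of_nonpos (log_nonpos ht.le ht1), inv_rpow ht.le, div_inv_eq_mul,
    mul_rpow (abs_nonneg _) (by positivity), ← rpow_mul ht.le, div_mul_cancel₀ _ hq.ne', mul_comm]

lemma monotoneOn_rpow_mul_abs_log_rpow {a q : ℝ} (ha : 0 < a) (hq : 0 < q) :
    MonotoneOn (fun t ↦ t ^ a * |log t| ^ q) (Ioc 0 (exp (-(q / a)))) := by
  have le_one {t : ℝ} (ht : t ∈ Ioc 0 (exp (-(q / a)))) : t ≤ 1 :=
    ht.2.trans (exp_le_one_iff.mpr (neg_nonpos.mpr (by positivity)))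
  have inv_mem {t : ℝ} (ht : t ∈ Ioc 0 (exp (-(q / a)))) : t⁻¹ ∈ Ici (exp (a / q)⁻¹) := by
    rw [inv_div, mem_Ici, le_inv_comm₀ (exp_pos _) ht.1, ← exp_neg]
    exact ht.2
  intro s hs t ht hst
  simp only [rpow_mul_abs_log_rpow_eq hq hs.1 (le_one hs),
    rpow_mul_abs_log_rpow_eq hq ht.1 (le_one ht)]
  have hs_log : 0 ≤ log s⁻¹ :=
    log_nonneg ((one_le_inv₀ hs.1).mpr (le_one hs))
  have hs_inv : 0 < s⁻¹ := inv_pos.mpr hs.1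
  exact rpow_le_rpow (by positivity)
    (log_div_self_rpow_antitoneOn (div_pos ha hq) (inv_mem ht) (inv_mem hs)
      (inv_anti₀ hs.1 hst)) hq.le

lemma antitoneOn_logWeight {a q : ℝ} (ha : 0 < a) (hq : 0 < q) :
    AntitoneOn (logWeight a q) (Ioc 0 (exp (-(q / a)))) := by
  intro s hs t ht hst
  have hs_log : log s < 0 :=
    log_neg hs.1 (hs.2.trans_lt (exp_lt_one_iff.mpr (neg_lt_zero.mpr (by positivity))))
  have hs_pos : 0 < s ^ a * |log s| ^ q :=
    mul_pos (rpow_pos_of_pos hs.1 a) (rpow_pos_of_pos (abs_pos.mpr hs_log.ne) q)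
  exact one_div_le_one_div_of_le hs_pos (monotoneOn_rpow_mul_abs_log_rpow ha hq hs ht hst)

lemma logWeight_div_rpow {a d q t : ℝ} (ht : 0 < t) :
    logWeight a q t / t ^ (d - a) = logWeight d q t := by
  rw [logWeight, logWeight, div_div, mul_right_comm, ← rpow_add ht, add_sub_cancel]

lemma logWeight_div_rpow_le_logWeight_min {a d q t u : ℝ} (ha : 0 < a) (had : a ≤ d) (hq : 0 < q)
    (ht : t ∈ Ioc 0 (exp (-(q / a)))) (hu : 0 < u) :
    logWeight a q t / u ^ (d - a) ≤ logWeight d q (min t u) := by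
  have hm : 0 < min t u := lt_min ht.1 hu
  rw [← logWeight_div_rpow (a := a) hm]
  refine div_le_div₀ (logWeight_nonneg a q hm.le) ?_ (by positivity) ?_
  · exact antitoneOn_logWeight ha hq ⟨hm, (min_le_left t u).trans ht.2⟩ ht (min_le_left t u)
  · exact rpow_le_rpow hm.le (min_le_right t u) (sub_nonneg.mpr had)

lemma logWeight_le_of_mem_Ioc {d q l s : ℝ} (hd : 0 ≤ d) (hq : 0 ≤ q) (hl : 0 < l)
    (hs : s ∈ Ioc (exp (-(l + 1))) (exp (-l))) :
    logWeight d q s ≤ exp (d * (l + 1)) * l ^ (-q) := by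
  have hs_log : l ≤ |log s| := by
    have := (log_le_iff_le_exp ((exp_pos _).trans hs.1)).mpr hs.2
    exact (le_neg_of_le_neg this).trans (neg_le_abs _)
  calc logWeight d q s ≤ 1 / (exp (-(l + 1)) ^ d * l ^ q) :=
        one_div_le_one_div_of_le (by positivity)
          (mul_le_mul (rpow_le_rpow (exp_pos _).le hs.1.le hd) (rpow_le_rpow hl.le hs_log hq)
            (by positivity) (rpow_nonneg ((exp_pos _).trans hs.1).le d))
    _ = exp (d * (l + 1)) * l ^ (-q) := by
        rw [← exp_mul, rpow_neg hl.le, one_div, mul_inv, ← exp_neg]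
        ring_nf

lemma sum_range_add_rpow_neg_le {l q : ℝ} (hl : 0 < l) (hq : 1 < q) (m : ℕ) :
    ∑ j ∈ Finset.range m, (l + j) ^ (-q) ≤ (1 / l + 1 / (q - 1)) * l ^ (1 - q) := by
  have antitone : AntitoneOn (fun x : ℝ ↦ x ^ (-q)) (Icc l (l + m)) :=
    (antitoneOn_rpow_Ioi_of_exponent_nonpos (by linarith)).mono fun x hx ↦ hl.trans_le hx.1
  have integral_le : ∫ x in l..l + m, x ^ (-q) ≤ 1 / (q - 1) * l ^ (1 - q) := by
    have hlm : 0 < l + m := by positivity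
    rw [integral_rpow (.inr ⟨by linarith, notMem_uIcc_of_lt hl hlm⟩), neg_add_eq_sub,
      ← neg_div_neg_eq, neg_sub, neg_sub, div_eq_inv_mul, one_div]
    exact mul_le_mul_of_nonneg_left (sub_le_self _ (by positivity))
      (inv_nonneg.mpr (sub_nonneg.mpr hq.le))
  calc ∑ j ∈ Finset.range m, (l + j) ^ (-q)
      ≤ ∑ j ∈ Finset.range (m + 1), (l + j) ^ (-q) :=
        Finset.sum_le_sum_of_subset_of_nonneg (Finset.range_mono m.le_succ)
          fun j _ _ ↦ by positivity
    _ = ∑ j ∈ Finset.range m, (l + (j + 1 : ℕ)) ^ (-q) + l ^ (-q) := by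
        rw [Finset.sum_range_succ', Nat.cast_zero, add_zero]
    _ ≤ 1 / (q - 1) * l ^ (1 - q) + l ^ (-q) := by
        gcongr
        exact antitone.sum_le_integral.trans integral_le
    _ = (1 / l + 1 / (q - 1)) * l ^ (1 - q) := by
        rw [show 1 - q = -q + 1 by ring, rpow_add_one hl.ne']
        field_simp
        ring

lemma Ioo_zero_exp_neg_subset_iUnion_Ioc (l : ℝ) :
    Ioo 0 (exp (-l)) ⊆ ⋃ j : ℕ, Ioc (exp (-(l + j + 1))) (exp (-(l + j))) := by
  intro s hs
  have hl : l < -log s := lt_neg_of_lt_neg ((log_lt_iff_lt_exp hs.1).mpr hs.2)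
  have floor_le := Nat.floor_le (sub_nonneg.mpr hl.le)
  have lt_floor := Nat.lt_floor_add_one (-log s - l)
  refine mem_iUnion.mpr ⟨⌊-log s - l⌋₊, ?_, ?_⟩
  · rw [← lt_log_iff_exp_lt hs.1]
    linarith
  · rw [← log_le_iff_le_exp hs.1]
    linarith

/-- The function `logWeight d q` cut off to `(0, ρ)`: the integrable majorant of the Stummel kernel,
to be evaluated at the gauge of the nearer of the two singularities. -/
noncomputable def truncLogWeight (d q ρ : ℝ) : ℝ → ENNReal :=
  (Ioo 0 ρ).indicator fun t ↦ ENNReal.ofReal (logWeight d q t)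

lemma measurable_truncLogWeight (d q ρ : ℝ) : Measurable (truncLogWeight d q ρ) :=
  (measurable_logWeight d q).ennreal_ofReal.indicator measurableSet_Ioo

lemma enorm_indicator_logWeight_div_rpow_le {a d q δ r t u : ℝ} (ha : 0 < a) (had : a ≤ d)
    (hq : 0 < q) (hδ : δ ≤ exp (-(q / a))) (ht : 0 < t) (hu : u ∈ Ioo 0 r) :
    ‖(Iio δ).indicator (logWeight a q) t / u ^ (d - a)‖ₑ ≤
      truncLogWeight d q (min r δ) u + truncLogWeight d q (min r δ) t := by
  by_cases htδ : t < δ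
  · have min_mem : min t u ∈ Ioo 0 (min r δ) :=
      ⟨lt_min ht hu.1, lt_min ((min_le_right t u).trans_lt hu.2) ((min_le_left t u).trans_lt htδ)⟩
    rw [indicator_of_mem (mem_Iio.mpr htδ), enorm_eq_ofReal
      (div_nonneg (logWeight_nonneg a q ht.le) (rpow_nonneg hu.1.le _))]
    calc ENNReal.ofReal (logWeight a q t / u ^ (d - a))
        ≤ ENNReal.ofReal (logWeight d q (min t u)) := ENNReal.ofReal_le_ofReal
          (logWeight_div_rpow_le_logWeight_min ha had hq ⟨ht, htδ.le.trans hδ⟩ hu.1)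
      _ = truncLogWeight d q (min r δ) (min t u) := by
          rw [truncLogWeight, indicator_of_mem min_mem]
      _ ≤ truncLogWeight d q (min r δ) u + truncLogWeight d q (min r δ) t := by
          rcases min_choice t u with h | h
          · rw [h]
            exact le_add_self
          · rw [h]
            exact le_self_add
  · simp only [indicator_of_notMem (mt mem_Iio.mp htδ), zero_div, enorm_zero, zero_le]

/-- Upper regularity of dimension `d`: the sublevel sets of the gauge `N`, thought of as balls
around the origin, satisfy `μ {N ≤ s} ≤ C sᵈ`. -/
def HasBallGrowth {X : Type*} [MeasurableSpace X] (μ : Measure X) (N : X → ℝ) (C d : ℝ) : Prop :=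
  ∀ s > 0, μ {z | N z ≤ s} ≤ ENNReal.ofReal (C * s ^ d)

namespace HasBallGrowth

section Measure

variable {X : Type*} [MeasurableSpace X] {μ : Measure X} {N : X → ℝ} {C d q : ℝ}

lemma ae_pos (hN : HasBallGrowth μ N C d) (hd : 0 < d) : ∀ᵐ z ∂μ, 0 < N z := by
  have bound_tendsto : Tendsto (fun s : ℝ ↦ ENNReal.ofReal (C * s ^ d)) (𝓝[>] 0) (𝓝 0) := by
    have := ((continuous_rpow_const hd.le).tendsto 0).const_mul C
    rw [zero_rpow hd.ne', mul_zero] at this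
    simpa using (ENNReal.tendsto_ofReal this).mono_left nhdsWithin_le_nhds
  simp only [ae_iff, not_lt]
  refine nonpos_iff_eq_zero.mp (ge_of_tendsto bound_tendsto ?_)
  filter_upwards [self_mem_nhdsWithin] with s hs
  exact (measure_mono fun z (hz : N z ≤ 0) ↦ hz.trans (le_of_lt hs)).trans (hN s hs)

lemma setLIntegral_shell_logWeight_le (hN : HasBallGrowth μ N C d) (hd : 0 ≤ d) (hq : 0 ≤ q)
    {l : ℝ} (hl : 0 < l) :
    ∫⁻ z in N ⁻¹' Ioc (exp (-(l + 1))) (exp (-l)), ENNReal.ofReal (logWeight d q (N z)) ∂μ ≤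
      ENNReal.ofReal (C * exp d * l ^ (-q)) := by
  calc _ ≤ ∫⁻ _ in N ⁻¹' Ioc (exp (-(l + 1))) (exp (-l)),
          ENNReal.ofReal (exp (d * (l + 1)) * l ^ (-q)) ∂μ :=
        setLIntegral_mono measurable_const fun z hz ↦
          ENNReal.ofReal_le_ofReal (logWeight_le_of_mem_Ioc hd hq hl hz)
    _ ≤ ENNReal.ofReal (exp (d * (l + 1)) * l ^ (-q)) *
          ENNReal.ofReal (C * exp (-l) ^ d) := by
        rw [setLIntegral_const]
        gcongr
        exact (measure_mono fun z hz ↦ hz.2).trans (hN _ (exp_pos _))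
    _ = ENNReal.ofReal (C * exp d * l ^ (-q)) := by
        have exp_split : exp d = exp (d * (l + 1)) * exp (-l) ^ d := by
          rw [← exp_mul, ← exp_add]
          ring_nf
        rw [← ENNReal.ofReal_mul (by positivity), exp_split]
        ring_nf

lemma setLIntegral_logWeight_le (hN : HasBallGrowth μ N C d) (hC : 0 ≤ C) (hd : 0 ≤ d)
    (hq : 1 < q) {l : ℝ} (hl : 0 < l) :
    ∫⁻ z in N ⁻¹' Ioo 0 (exp (-l)), ENNReal.ofReal (logWeight d q (N z)) ∂μ ≤
      ENNReal.ofReal (C * exp d * ((1 / l + 1 / (q - 1)) * l ^ (1 - q))) := by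
  calc _ ≤ ∫⁻ z in ⋃ j : ℕ, N ⁻¹' Ioc (exp (-(l + j + 1))) (exp (-(l + j))),
          ENNReal.ofReal (logWeight d q (N z)) ∂μ :=
        lintegral_mono_set <| by
          rw [← preimage_iUnion]
          exact preimage_mono (Ioo_zero_exp_neg_subset_iUnion_Ioc l)
    _ ≤ ∑' j : ℕ, ENNReal.ofReal (C * exp d * (l + j) ^ (-q)) :=
        (lintegral_iUnion_le _ _).trans <| ENNReal.tsum_le_tsum fun j ↦
          hN.setLIntegral_shell_logWeight_le hd (by linarith) (by positivity)
    _ ≤ ENNReal.ofReal (C * exp d * ((1 / l + 1 / (q - 1)) * l ^ (1 - q))) := by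
        refine ENNReal.tsum_le_of_sum_range_le fun m ↦ ?_
        rw [← ENNReal.ofReal_sum_of_nonneg fun j _ ↦ by positivity, ← Finset.mul_sum]
        gcongr
        exact sum_range_add_rpow_neg_le hl hq m

lemma lintegral_truncLogWeight_le (hN : HasBallGrowth μ N C d) (hN_meas : Measurable N)
    (hC : 0 ≤ C) (hd : 0 ≤ d) (hq : 1 < q) {ρ : ℝ} (hρ : ρ ∈ Ioo 0 1) :
    ∫⁻ z, truncLogWeight d q ρ (N z) ∂μ ≤
      ENNReal.ofReal (C * exp d * ((1 / -log ρ + 1 / (q - 1)) * (-log ρ) ^ (1 - q))) := by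
  have := hN.setLIntegral_logWeight_le hC hd hq (neg_pos.mpr (log_neg hρ.1 hρ.2))
  rwa [neg_neg, exp_log hρ.1, ← lintegral_indicator (hN_meas measurableSet_Ioo)] at this

end Measure

section AddGroup

variable {G : Type*} [AddGroup G] [MeasurableSpace G] [MeasurableAdd G] [MeasurableNeg G]
  {μ : Measure G} [μ.IsAddLeftInvariant] [μ.IsNegInvariant] {N : G → ℝ} {C a d q δ r : ℝ}

lemma setLIntegral_stummelKernel_le_two_mul (hN : HasBallGrowth μ N C d) (hN_meas : Measurable N)
    (ha : 0 < a) (had : a ≤ d) (hq : 0 < q) (hδ : δ ≤ exp (-(q / a))) (x : G) :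
    ∫⁻ y in {y | N (x - y) < r},
        ‖(Iio δ).indicator (logWeight a q) (N y) / N (x - y) ^ (d - a)‖ₑ ∂μ ≤
      2 * ∫⁻ z, truncLogWeight d q (min r δ) (N z) ∂μ := by
  have sub_measPres := μ.measurePreserving_sub_left x
  have N_pos : ∀ᵐ y ∂μ, 0 < N y := hN.ae_pos (ha.trans_le had)
  have N_sub_pos : ∀ᵐ y ∂μ, 0 < N (x - y) := sub_measPres.quasiMeasurePreserving.ae N_pos
  have trunc_meas : Measurable fun y ↦ truncLogWeight d q (min r δ) (N y) :=
    (measurable_truncLogWeight d q _).comp hN_meas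
  have ball_meas : MeasurableSet {y | N (x - y) < r} :=
    measurableSet_lt (hN_meas.comp sub_measPres.measurable) measurable_const
  calc _ ≤ ∫⁻ y in {y | N (x - y) < r}, (truncLogWeight d q (min r δ) (N (x - y)) +
          truncLogWeight d q (min r δ) (N y)) ∂μ := by
        refine setLIntegral_mono_ae' ball_meas ?_
        filter_upwards [N_pos, N_sub_pos] with y hy hxy hyr
        exact enorm_indicator_logWeight_div_rpow_le ha had hq hδ hy ⟨hxy, hyr⟩
    _ ≤ ∫⁻ y, (truncLogWeight d q (min r δ) (N (x - y)) +
          truncLogWeight d q (min r δ) (N y)) ∂μ := setLIntegral_le_lintegral _ _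
    _ = 2 * ∫⁻ z, truncLogWeight d q (min r δ) (N z) ∂μ := by
        rw [lintegral_add_right _ trunc_meas, two_mul,
          sub_measPres.lintegral_comp trunc_meas]

lemma setLIntegral_stummelKernel_le (hN : HasBallGrowth μ N C d) (hN_meas : Measurable N)
    (hC : 0 ≤ C) (ha : 0 < a) (had : a ≤ d) (hq : 1 < q) (hδ₀ : 0 < δ)
    (hδ : δ ≤ exp (-(q / a))) (x : G) (hr : 0 < r) :
    ∫⁻ y in {y | N (x - y) < r},
        ‖(Iio δ).indicator (logWeight a q) (N y) / N (x - y) ^ (d - a)‖ₑ ∂μ ≤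
      ENNReal.ofReal
        (2 * (C * exp d * (a / q + 1 / (q - 1))) * (-log (min r δ)) ^ (1 - q)) := by
  set ρ := min r δ
  have hρ₀ : 0 < ρ := lt_min hr hδ₀
  have hq₀ : 0 < q := zero_lt_one.trans hq
  have le_neg_log : q / a ≤ -log ρ :=
    le_neg_of_le_neg ((log_le_iff_le_exp hρ₀).mpr ((min_le_right r δ).trans hδ))
  have neg_log_pos : 0 < -log ρ := (div_pos hq₀ ha).trans_le le_neg_log
  have hρ₁ : ρ < 1 := (log_neg_iff hρ₀).mp (neg_pos.mp neg_log_pos)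
  have one_div_le : 1 / -log ρ ≤ a / q := by
    rw [← one_div_div q a]
    exact one_div_le_one_div_of_le (div_pos hq₀ ha) le_neg_log
  calc _ ≤ 2 * ∫⁻ z, truncLogWeight d q ρ (N z) ∂μ :=
        hN.setLIntegral_stummelKernel_le_two_mul hN_meas ha had hq₀ hδ x
    _ ≤ 2 * ENNReal.ofReal (C * exp d * ((1 / -log ρ + 1 / (q - 1)) * (-log ρ) ^ (1 - q))) := by
        gcongr
        exact hN.lintegral_truncLogWeight_le hN_meas hC (ha.le.trans had) hq ⟨hρ₀, hρ₁⟩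
    _ ≤ 2 * ENNReal.ofReal (C * exp d * ((a / q + 1 / (q - 1)) * (-log ρ) ^ (1 - q))) := by
        gcongr
    _ = _ := by
        rw [← ENNReal.ofReal_ofNat 2, ← ENNReal.ofReal_mul zero_le_two]
        ring_nf

end AddGroup

end HasBallGrowth

section BetaDist

variable {n : ℕ} {β : Fin n → ℝ}

lemma betaDist_nonneg (z : Fin n → ℝ) : 0 ≤ betaDist n β z := by
  unfold betaDist
  positivity

lemma measurable_betaDist : Measurable (betaDist n β) := by
  unfold betaDist
  fun_prop

lemma abs_le_rpow_of_betaDist_le (hβ : ∀ k, 0 < β k) {s : ℝ} {z : Fin n → ℝ}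
    (hz : betaDist n β z ≤ s) (k : Fin n) : |z k| ≤ s ^ (n / (∑ i, β i) * β k) := by
  have hn : (0 : ℝ) < n := Nat.cast_pos.mpr k.pos
  have sum_pos : 0 < ∑ i, β i := Finset.sum_pos (fun i _ ↦ hβ i) ⟨k, Finset.mem_univ k⟩
  have hs : 0 ≤ s := (betaDist_nonneg z).trans hz
  have sum_le : ∑ i, |z i| ^ (1 / β i) ≤ s ^ (n / ∑ i, β i) := by
    rw [← inv_div]
    exact (le_rpow_inv_iff_of_pos (by positivity) hs (by positivity)).mpr hz
  have term_le : |z k| ^ (1 / β k) ≤ s ^ (n / ∑ i, β i) :=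
    (Finset.single_le_sum (f := fun i ↦ |z i| ^ (1 / β i)) (fun i _ ↦ by positivity)
      (Finset.mem_univ k)).trans sum_le
  rw [rpow_mul hs]
  rwa [one_div, rpow_inv_le_iff_of_pos (abs_nonneg _) (by positivity) (hβ k)] at term_le

lemma hasBallGrowth_betaDist (hn : n ≠ 0) (hβ : ∀ k, 0 < β k) :
    HasBallGrowth volume (betaDist n β) (2 ^ n) n := by
  intro s hs
  have sum_pos : 0 < ∑ i, β i :=
    Finset.sum_pos (fun i _ ↦ hβ i) ⟨⟨0, Nat.pos_of_ne_zero hn⟩, Finset.mem_univ _⟩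
  set R : Fin n → ℝ := fun k ↦ s ^ (n / (∑ i, β i) * β k)
  have subset_box : {z | betaDist n β z ≤ s} ⊆ Icc (-R) R := fun z hz ↦
    ⟨fun k ↦ (abs_le.mp (abs_le_rpow_of_betaDist_le hβ hz k)).1,
      fun k ↦ (abs_le.mp (abs_le_rpow_of_betaDist_le hβ hz k)).2⟩
  have prod_R : ∏ k, R k = s ^ (n : ℝ) := by
    rw [← rpow_sum_of_pos hs, ← Finset.mul_sum, div_mul_cancel₀ _ sum_pos.ne']
  calc volume {z | betaDist n β z ≤ s} ≤ volume (Icc (-R) R) := measure_mono subset_box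
    _ = ∏ k, ENNReal.ofReal (2 * R k) := by
        simp only [Real.volume_Icc_pi, Pi.neg_apply, sub_neg_eq_add, two_mul]
    _ = ENNReal.ofReal (2 ^ n * s ^ (n : ℝ)) := by
        rw [← ENNReal.ofReal_prod_of_nonneg fun k _ ↦ by positivity, Finset.prod_mul_distrib,
          Finset.prod_const, Finset.card_univ, Fintype.card_fin, prod_R]

lemma fex_eq_indicator_logWeight (y : Fin n → ℝ) :
    fex n β y = (Iio (exp (-3))).indicator (logWeight 2 6) (betaDist n β y) :=
  rfl

lemma fex_div_rpow_nonneg (x y : Fin n → ℝ) :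
    0 ≤ fex n β y / betaDist n β (x - y) ^ ((n : ℝ) - 2) := by
  rw [fex_eq_indicator_logWeight]
  have fex_nonneg : 0 ≤ (Iio (exp (-3))).indicator (logWeight 2 6) (betaDist n β y) :=
    indicator_apply_nonneg fun _ ↦ logWeight_nonneg 2 6 (betaDist_nonneg y)
  exact div_nonneg fex_nonneg (rpow_nonneg (betaDist_nonneg _) _)

lemma setIntegral_fex_div_rpow_le (hn : 2 ≤ n) (hβ : ∀ k, 0 < β k) (x : Fin n → ℝ) {r : ℝ}
    (hr : 0 < r) :
    ∫ y in {y | betaDist n β (x - y) < r}, fex n β y / betaDist n β (x - y) ^ ((n : ℝ) - 2) ≤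
      2 * (2 ^ n * exp n * (2 / 6 + 1 / (6 - 1))) * (-log (min r (exp (-3)))) ^ (-5 : ℝ) := by
  have lintegral_le := (hasBallGrowth_betaDist (by omega) hβ).setLIntegral_stummelKernel_le
    (a := 2) (q := 6) measurable_betaDist (by positivity) two_pos (mod_cast hn) (by norm_num)
    (exp_pos (-3)) (by norm_num) x hr
  rw [show (1 : ℝ) - 6 = -5 by norm_num] at lintegral_le
  have neg_log_nonneg : 0 ≤ -log (min r (exp (-3))) :=
    neg_nonneg.mpr (log_nonpos (by positivity)
      ((min_le_right _ _).trans (exp_le_one_iff.mpr (by norm_num))))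
  refine (ENNReal.ofReal_le_ofReal_iff (by positivity)).mp ?_
  rw [← enorm_eq_ofReal (integral_nonneg fun y ↦ fex_div_rpow_nonneg x y)]
  exact (enorm_integral_le_lintegral_enorm _).trans lintegral_le

lemma tendsto_etaEx_of_setIntegral_le {C : ℝ} (hC : ∀ x : Fin n → ℝ, ∀ r > 0,
    ∫ y in {y | betaDist n β (x - y) < r}, fex n β y / betaDist n β (x - y) ^ ((n : ℝ) - 2) ≤
      C * (-log (min r (exp (-3)))) ^ (-5 : ℝ)) :
    Tendsto (etaEx n β) (𝓝[>] 0) (𝓝 0) := by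
  have neg_log_tendsto : Tendsto (fun r : ℝ ↦ -log (min r (exp (-3)))) (𝓝[>] 0) atTop := by
    refine (tendsto_neg_atBot_atTop.comp tendsto_log_nhdsGT_zero).congr' ?_
    filter_upwards [nhdsWithin_le_nhds (gt_mem_nhds (exp_pos (-3)))] with r hr
    simp only [Function.comp_apply, min_eq_left hr.le]
  have bound_tendsto := ((tendsto_rpow_neg_atTop (y := 5) (by norm_num)).comp
    neg_log_tendsto).const_mul C
  rw [mul_zero] at bound_tendsto
  refine tendsto_of_tendsto_of_tendsto_of_le_of_le' tendsto_const_nhds bound_tendsto ?_ ?_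
  · exact .of_forall fun r ↦ Real.iSup_nonneg fun x ↦
      integral_nonneg fun y ↦ fex_div_rpow_nonneg x y
  · filter_upwards [self_mem_nhdsWithin] with r hr
    exact ciSup_le fun x ↦ hC x r hr

end BetaDist

theorem example_function_stummel_bound_general
    (n : ℕ) (hn : 2 ≤ n) (β : Fin n → ℝ) (hβ : ∀ k, 0 < β k) :
    (∃ C > 0, ∀ x : Fin n → ℝ, ∀ r > 0,
        (∫ y in {y : Fin n → ℝ | betaDist n β (x - y) < r},
            fex n β y / betaDist n β (x - y) ^ ((n:ℝ) - 2)) ≤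
          C * (-Real.log (min r (Real.exp (-3)))) ^ (-5 : ℝ)) ∧
    Tendsto (etaEx n β) (𝓝[>] (0:ℝ)) (𝓝 0) := by
  have bound := fun x r hr ↦ setIntegral_fex_div_rpow_le hn hβ x (r := r) hr
  exact ⟨⟨_, by positivity, bound⟩, tendsto_etaEx_of_setIntegral_le bound⟩

/-- the Stummel-kernel integrals of the example function are bounded by
`C (-log min(r, e⁻³))⁻⁵`; in particular the Stummel modulus `η_β(r) → 0` as `r → 0⁺`. -/
theorem example_function_stummel_bound
    (n : ℕ) (hn : 3 ≤ n) (β : Fin n → ℝ) (hβ : ∀ k, (1:ℝ)/2 ≤ β k) :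
    (∃ C > 0, ∀ x : Fin n → ℝ, ∀ r > 0,
        (∫ y in {y : Fin n → ℝ | betaDist n β (x - y) < r},
            fex n β y / betaDist n β (x - y) ^ ((n:ℝ) - 2)) ≤
          C * (-Real.log (min r (Real.exp (-3)))) ^ (-5 : ℝ)) ∧
    Tendsto (etaEx n β) (𝓝[>] (0:ℝ)) (𝓝 0) :=
  example_function_stummel_bound_general n (by omega) β fun k ↦ one_half_pos.trans_le (hβ k)
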